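/- Let n ≥ 1 be an integer, and let ψ be a property of assignments (a predicate on functions ν from variable indices to Bool) that depends only on the values of ν at variable indices ≥ 2n (i.e., if two assignments agree on all indices ≥ 2n, then ψ holds of one iff it holds of the other). If some assignment satisfies ψ, then: (a) some assignment satisfies both ψ and φ2 = Chain_Inc(0,n) ∧ Chain_Dec(n,2n) ∧ Bridge(2n); and (b) no assignment satisfies both ψ and φ1 = Chain_Inc(0,2n) ∧ Bridge(2n). -/

import Mathlib

/-!
On the indices below `2n`, `φ2` is satisfied by setting `x_0, …, x_{n-1}` to true and
`x_n, …, x_{2n-1}` to false: both chains are constant and every bridge joins opposite values.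
Since `ψ` only sees the indices `≥ 2n`, any model of `ψ` can be overwritten in this way.

For `φ1`, the cyclic chain over all `2n` variables forces `x_0 = x_{2n-1}`: the implications
carry `x_0` along to `x_{2n-1}` (`chainIncSat.true_of_zero`), and the wrap-around clause
gives the converse. The bridge clauses for `i = 0` say `x_0 ≠ x_{2n-1}`.
-/

/-- Satisfaction of the cyclic increasing chain `Chain_Inc(i,j)`: for each
`k` with `i ≤ k < j`, the clause `¬x_k ∨ x_{i + ((k+1-i) % (j-i))}` holds. -/
def chainIncSat (i j : ℕ) (ν : ℕ → Bool) : Prop :=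
  ∀ k, i ≤ k → k < j → (ν k = false ∨ ν (i + (k + 1 - i) % (j - i)) = true)

/-- Satisfaction of the cyclic decreasing chain `Chain_Dec(i,j)`: for each
`k` with `i ≤ k < j`, the clause `x_k ∨ ¬x_{i + ((k+1-i) % (j-i))}` holds. -/
def chainDecSat (i j : ℕ) (ν : ℕ → Bool) : Prop :=
  ∀ k, i ≤ k → k < j → (ν k = true ∨ ν (i + (k + 1 - i) % (j - i)) = false)

/-- Satisfaction of the bridge formula `Bridge(2n)`: for each `i < n`, the
clauses `x_i ∨ x_{2n-1-i}` and `¬x_i ∨ ¬x_{2n-1-i}` hold. -/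
def bridgeSat (n : ℕ) (ν : ℕ → Bool) : Prop :=
  ∀ i, i < n →
    (ν i = true ∨ ν (2 * n - 1 - i) = true) ∧
    (ν i = false ∨ ν (2 * n - 1 - i) = false)

theorem chainIncSat.true_of_zero {N : ℕ} {ν : ℕ → Bool} (h : chainIncSat 0 N ν)
    (h0 : ν 0 = true) : ∀ k, k < N → ν k = true := by
  intro k
  induction k with
  | zero => exact fun _ => h0
  | succ k ih =>
    intro hk
    have hc := h k (Nat.zero_le k) (by omega)
    simpa [ih (by omega), Nat.mod_eq_of_lt hk] using hc

theorem phi1_phi2_with_disjoint_side_condition (n : ℕ) (hn : 1 ≤ n)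
    (ψ : (ℕ → Bool) → Prop)
    (hψ : ∀ ν ν' : ℕ → Bool, (∀ m, 2 * n ≤ m → ν m = ν' m) → (ψ ν ↔ ψ ν'))
    (hsat : ∃ ν : ℕ → Bool, ψ ν) :
    (∃ ν : ℕ → Bool, ψ ν ∧ chainIncSat 0 n ν ∧ chainDecSat n (2 * n) ν ∧ bridgeSat n ν) ∧
    (¬ ∃ ν : ℕ → Bool, ψ ν ∧ chainIncSat 0 (2 * n) ν ∧ bridgeSat n ν) := by
  constructor
  · obtain ⟨ν₀, hν₀⟩ := hsat
    refine ⟨fun m => if m < n then true else if m < 2 * n then false else ν₀ m,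
      (hψ _ ν₀ ?_).2 hν₀, ?_, ?_, ?_⟩
    · intro m hm
      have h1 : ¬ m < n := by omega
      have h2 : ¬ m < 2 * n := by omega
      simp [h1, h2]
    · intro k _ _
      right
      have h1 : 0 + (k + 1 - 0) % (n - 0) < n := by
        simpa using Nat.mod_lt (k + 1) hn
      simp only [h1, if_true]
    · intro k _ _
      right
      have hlt : (k + 1 - n) % (2 * n - n) < 2 * n - n := Nat.mod_lt _ (by omega)
      have h1 : ¬ n + (k + 1 - n) % (2 * n - n) < n := by omega
      have h2 : n + (k + 1 - n) % (2 * n - n) < 2 * n := by omega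
      simp only [h1, h2, if_true, if_false]
    · intro i hi
      have h1 : ¬ 2 * n - 1 - i < n := by omega
      have h2 : 2 * n - 1 - i < 2 * n := by omega
      simp only [hi, h1, h2, if_true, if_false]
      simp
  · rintro ⟨ν, -, hc, hb⟩
    obtain ⟨hor, hnand⟩ := hb 0 hn
    have hwrap := hc (2 * n - 1) (Nat.zero_le _) (by omega)
    have hidx : 0 + (2 * n - 1 + 1 - 0) % (2 * n - 0) = 0 := by
      rw [Nat.sub_add_cancel (by omega)]
      simp
    rw [hidx] at hwrap
    rw [Nat.sub_zero] at hor hnand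
    have hfwd := fun h0 => hc.true_of_zero h0 (2 * n - 1) (by omega)
    cases h0 : ν 0 <;> simp_all
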